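/- For a planar binary tree T with m leaves (numbered 1,…,m from left to right) and 1 ≤ a < b < c ≤ m, define the restriction type τ_T(a,b,c) ∈ {L, R} by: τ_T(a,b,c) = L if the least common ancestor of leaves a and b is a proper descendant of the least common ancestor of leaves a and c (the induced bracketing is (ab)c), and τ_T(a,b,c) = R otherwise (the induced bracketing is a(bc)); order the two types by L < R. Then the map T ↦ (τ_T(a,b,c))_{1 ≤ a < b < c ≤ m} is an order embedding of the Tamari order on binary trees with m leaves into the product of the two-element posets {L < R}: it is injective, and S ≤ T in the Tamari order if and only if τ_S(a,b,c) ≤ τ_T(a,b,c) for every triple a < b < c. -/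

import Mathlib

/-!
Rotating at a node preserves the type of every triple except those with one leaf in each of the
three rotated subtrees, and these pass from `L` to `R`; so `τ` is monotone.

For the converse, let `T = node l' r'` with `|l'| = q` and suppose `τ_S ≤ τ_T`.  Every triple
`a < b ≤ q < c` has type `L` in `T`, hence also in `S`.  This forces `{1, …, q}` to be the leaf
set of a subtree on the left spine of `S`, and rotating along the spine brings this subtree to the
top: `S ≤ node l r` with `|l| = q`, without changing the type of any triple lying on one side of
the cut (`exists_split`).  Hence `τ_l ≤ τ_{l'}` and `τ_r ≤ τ_{r'}`, and induction on `T` concludes.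

Injectivity is a direct induction: if the root of one tree cuts at `p` and that of the other at
`q > p`, the triple `(p, p + 1, q + 1)` has different types in the two trees.
-/

/-- Planar binary trees. -/
inductive PTree : Type
  | leaf : PTree
  | node : PTree → PTree → PTree
deriving DecidableEq

namespace PTree

/-- The number of leaves of a planar binary tree. -/
def numLeaves : PTree → ℕ
  | leaf => 1
  | node l r => numLeaves l + numLeaves r

/-- One right rotation somewhere in a tree: replace a subtree
`node (node A B) C` by `node A (node B C)`. -/
inductive Rot : PTree → PTree → Prop
  | rotate (A B C : PTree) : Rot (node (node A B) C) (node A (node B C))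
  | left {l l' : PTree} (r : PTree) : Rot l l' → Rot (node l r) (node l' r)
  | right (l : PTree) {r r' : PTree} : Rot r r' → Rot (node l r) (node l r')

/-- The Tamari relation: the reflexive–transitive closure of right rotation. -/
def TamariLE : PTree → PTree → Prop := Relation.ReflTransGen Rot

end PTree

namespace PTree

/-- The restriction type `τ_T(a,b,c) ∈ {L, R}` of a triple of leaves
`1 ≤ a < b < c ≤ numLeaves T` (leaves numbered from `1` left to right):
`false` (= `L`) if the least common ancestor of leaves `a` and `b` is a proper
descendant of that of `a` and `c` (induced bracketing `(ab)c`), and `true` (= `R`)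
otherwise (induced bracketing `a(bc)`).  Computed by recursion on the tree. -/
def tau : PTree → ℕ → ℕ → ℕ → Bool
  | leaf, _, _, _ => true
  | node l r, a, b, c =>
    if c ≤ numLeaves l then tau l a b c
    else if numLeaves l < a then
      tau r (a - numLeaves l) (b - numLeaves l) (c - numLeaves l)
    else if b ≤ numLeaves l then false
    else true

end PTree

namespace PTree

lemma numLeaves_pos (T : PTree) : 1 ≤ T.numLeaves := by
  induction T with
  | leaf => simp [numLeaves]
  | node l r ihl ihr => simp only [numLeaves]; omega

lemma eq_leaf_of_numLeaves {T : PTree} (h : T.numLeaves = 1) : T = leaf := by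
  cases T with
  | leaf => rfl
  | node l r =>
    have := numLeaves_pos l
    have := numLeaves_pos r
    simp only [numLeaves] at h
    omega

lemma Rot.numLeaves_eq {S T : PTree} (h : Rot S T) : S.numLeaves = T.numLeaves := by
  induction h with
  | rotate A B C => simp only [numLeaves]; omega
  | left r _ ih => simp only [numLeaves]; omega
  | right l _ ih => simp only [numLeaves]; omega

lemma TamariLE.numLeaves_eq {S T : PTree} (h : TamariLE S T) : S.numLeaves = T.numLeaves := by
  induction h with
  | refl => rfl
  | tail _ h ih => rw [ih, h.numLeaves_eq]

lemma TamariLE.node {l l' r r' : PTree} (hl : TamariLE l l') (hr : TamariLE r r') :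
    TamariLE (node l r) (node l' r') :=
  Relation.ReflTransGen.trans
    (Relation.ReflTransGen.lift (fun x => PTree.node x r) (fun _ _ h => Rot.left r h) _ _ hl)
    (Relation.ReflTransGen.lift (fun x => PTree.node l' x) (fun _ _ h => Rot.right l' h) _ _ hr)

section tau_node

variable (l r : PTree) {a b c : ℕ}

lemma tau_node_left (h : c ≤ l.numLeaves) : tau (node l r) a b c = tau l a b c := by
  simp [tau, h]

lemma tau_node_right (h : l.numLeaves < a) (hac : a < c) :
    tau (node l r) a b c = tau r (a - l.numLeaves) (b - l.numLeaves) (c - l.numLeaves) := by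
  rw [tau, if_neg (by omega), if_pos h]

lemma tau_node_cross_left (hab : a < b) (hb : b ≤ l.numLeaves) (hc : l.numLeaves < c) :
    tau (node l r) a b c = false := by
  rw [tau, if_neg (by omega), if_neg (by omega), if_pos hb]

lemma tau_node_cross_right (ha : a ≤ l.numLeaves) (hb : l.numLeaves < b) (hbc : b < c) :
    tau (node l r) a b c = true := by
  rw [tau, if_neg (by omega), if_neg (by omega), if_neg (by omega)]

end tau_node

lemma Rot.tau_le {S T : PTree} (h : Rot S T) {a b c : ℕ} (hab : a < b) (hbc : b < c) :
    tau S a b c ≤ tau T a b c := by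
  induction h generalizing a b c with
  | rotate A B C =>
    simp only [tau, numLeaves]
    -- leaves of `C` are renumbered in one step on the left and in two steps on the right
    simp only [Nat.sub_add_eq]
    grind [Bool.le_iff_imp]
  | @left l l' r h ih =>
    have e := h.numLeaves_eq
    simp only [tau, e]
    split_ifs
    · exact ih hab hbc
    all_goals exact le_rfl
  | right l h ih =>
    simp only [tau]
    split_ifs
    · exact le_rfl
    · exact ih (by omega) (by omega)
    all_goals exact le_rfl

lemma TamariLE.tau_le {S T : PTree} (h : TamariLE S T) {a b c : ℕ} (hab : a < b) (hbc : b < c) :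
    tau S a b c ≤ tau T a b c := by
  induction h with
  | refl => exact le_rfl
  | tail _ h ih => exact ih.trans (h.tau_le hab hbc)

/-- If every triple `a < b ≤ q < c` has type `L` in `S`, then the leaves `1, …, q` form a subtree
on the left spine of `S`, and rotations bring the root cut to position `q` while preserving the
types of all triples that do not straddle the cut. -/
lemma exists_split (S : PTree) (q : ℕ) (hq : 1 ≤ q) (hqS : q < S.numLeaves)
    (h : ∀ a b c, 1 ≤ a → a < b → b ≤ q → q < c → c ≤ S.numLeaves → tau S a b c = false) :
    ∃ l r, l.numLeaves = q ∧ TamariLE S (node l r) ∧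
      ∀ a b c, a < b → b < c → (c ≤ q ∨ q < a) →
        tau (node l r) a b c = tau S a b c := by
  induction S with
  | leaf => simp only [numLeaves] at hqS; omega
  | node L R ihL _ =>
    have hL := numLeaves_pos L
    rcases lt_trichotomy q L.numLeaves with hlt | heq | hgt
    · obtain ⟨l, r, hl, hle, htau⟩ := ihL hlt (by
        intro a b c h1 h2 h3 h4 h5
        rw [← tau_node_left L R h5]
        exact h a b c h1 h2 h3 h4 (by simp only [numLeaves]; omega))
      have hn := hle.numLeaves_eq
      simp only [numLeaves] at hn
      refine ⟨l, node r R, hl, ?_, ?_⟩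
      · exact (hle.node (r' := R) Relation.ReflTransGen.refl).tail (Rot.rotate l r R)
      · intro a b c hab hbc hac
        by_cases hc : c ≤ L.numLeaves
        · rw [tau_node_left L R hc, ← htau a b c hab hbc hac]
          rcases hac with hac | hac
          · rw [tau_node_left _ _ (by omega), tau_node_left _ _ (by omega)]
          · rw [tau_node_right l r (by omega) (by omega), tau_node_right l _ (by omega) (by omega),
              tau_node_left r R (by omega)]
        · have ha : q < a := by omega
          rw [tau_node_right _ _ (by omega) (by omega)]
          by_cases haL : L.numLeaves < a
          · rw [tau_node_right _ _ (by omega) (by omega), tau_node_right _ _ haL (by omega)]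
            congr 1 <;> omega
          · by_cases hb : b ≤ L.numLeaves
            · rw [tau_node_cross_left _ _ (by omega) (by omega) (by omega),
                tau_node_cross_left _ _ (by omega) (by omega) (by omega)]
            · rw [tau_node_cross_right _ _ (by omega) (by omega) (by omega),
                tau_node_cross_right _ _ (by omega) (by omega) (by omega)]
    · exact ⟨L, R, heq.symm, Relation.ReflTransGen.refl, fun _ _ _ _ _ _ => rfl⟩
    · -- a cut strictly inside `R` would make the triple `(|L|, |L| + 1, q + 1)` of type `R`
      have h1 := h L.numLeaves (L.numLeaves + 1) (q + 1) hL (by omega) (by omega) (by omega)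
        (by omega)
      rw [tau_node_cross_right _ _ (by omega) (by omega) (by omega)] at h1
      exact absurd h1 (by simp)

lemma tamariLE_of_tau_le (T S : PTree) (hST : S.numLeaves = T.numLeaves)
    (h : ∀ a b c, 1 ≤ a → a < b → b < c → c ≤ T.numLeaves → tau S a b c ≤ tau T a b c) :
    TamariLE S T := by
  induction T generalizing S with
  | leaf => rw [eq_leaf_of_numLeaves hST]; exact Relation.ReflTransGen.refl
  | node l' r' ihl ihr =>
    have hl' := numLeaves_pos l'
    have hr' := numLeaves_pos r'
    simp only [numLeaves] at hST h
    obtain ⟨l, r, hl, hle, htau⟩ := exists_split S l'.numLeaves hl' (by omega) (by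
      intro a b c h1 h2 h3 h4 h5
      have := h a b c h1 h2 (by omega) (by omega)
      rw [tau_node_cross_left _ _ h2 h3 h4] at this
      exact le_bot_iff.mp this)
    have hn := hle.numLeaves_eq
    simp only [numLeaves] at hn
    refine Relation.ReflTransGen.trans hle (TamariLE.node (ihl l hl ?_) (ihr r (by omega) ?_))
    · intro a b c h1 h2 h3 h4
      have := h a b c h1 h2 h3 (by omega)
      rwa [← htau a b c h2 h3 (Or.inl h4), tau_node_left _ _ (by omega),
        tau_node_left _ _ (by omega)] at this
    · intro a b c h1 h2 h3 h4
      have := h (a + l'.numLeaves) (b + l'.numLeaves) (c + l'.numLeaves) (by omega) (by omega)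
        (by omega) (by omega)
      rw [← htau _ _ _ (by omega) (by omega) (Or.inr (by omega)),
        tau_node_right _ _ (by omega) (by omega), tau_node_right _ _ (by omega) (by omega)] at this
      simpa [hl] using this

/-- The triple `(|l|, |l| + 1, |l'| + 1)` shows that the root cut of the tree with the larger
types cannot lie further to the right. -/
lemma numLeaves_le_of_tau_le {l r l' r' : PTree}
    (h : ∀ a b c, 1 ≤ a → a < b → b < c → c ≤ (node l' r').numLeaves →
      tau (node l r) a b c ≤ tau (node l' r') a b c) :
    l'.numLeaves ≤ l.numLeaves := by
  by_contra! hlt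
  have hr' := numLeaves_pos r'
  have := h l.numLeaves (l.numLeaves + 1) (l'.numLeaves + 1) (numLeaves_pos l) (by omega)
    (by omega) (by simp only [numLeaves]; omega)
  rw [tau_node_cross_right _ _ (by omega) (by omega) (by omega),
    tau_node_cross_left _ _ (by omega) (by omega) (by omega)] at this
  exact absurd this (by simp)

lemma eq_of_tau_eq (S T : PTree) (hST : S.numLeaves = T.numLeaves)
    (h : ∀ a b c, 1 ≤ a → a < b → b < c → c ≤ T.numLeaves → tau S a b c = tau T a b c) :
    S = T := by
  induction T generalizing S with
  | leaf => exact eq_leaf_of_numLeaves hST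
  | node l' r' ihl ihr =>
    cases S with
    | leaf => exact (eq_leaf_of_numLeaves hST.symm).symm
    | node l r =>
      have hl : l.numLeaves = l'.numLeaves := le_antisymm
        (numLeaves_le_of_tau_le fun a b c h1 h2 h3 h4 => (h a b c h1 h2 h3 (hST ▸ h4)).ge)
        (numLeaves_le_of_tau_le fun a b c h1 h2 h3 h4 => (h a b c h1 h2 h3 h4).le)
      simp only [numLeaves] at hST h
      congr 1
      · refine ihl l hl fun a b c h1 h2 h3 h4 => ?_
        have := h a b c h1 h2 h3 (by omega)
        rwa [tau_node_left _ _ (by omega), tau_node_left _ _ (by omega)] at this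
      · refine ihr r (by omega) fun a b c h1 h2 h3 h4 => ?_
        have := h (a + l'.numLeaves) (b + l'.numLeaves) (c + l'.numLeaves) (by omega) (by omega)
          (by omega) (by omega)
        rw [tau_node_right _ _ (by omega) (by omega),
          tau_node_right _ _ (by omega) (by omega)] at this
        simpa [hl] using this

end PTree

open PTree

/-- The map `T ↦ (τ_T(a,b,c))` is an order embedding of the Tamari
order on planar binary trees with `m` leaves into the product of the two-element
posets `{L < R}` (here `Bool` with `false = L < true = R`): it is injective, and
`S ≤ T` in the Tamari order iff `τ_S(a,b,c) ≤ τ_T(a,b,c)` for all `a < b < c`. -/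
theorem tamari_embedding (m : ℕ) :
    (∀ S T : PTree, S.numLeaves = m → T.numLeaves = m →
      (∀ a b c : ℕ, 1 ≤ a → a < b → b < c → c ≤ m → tau S a b c = tau T a b c) → S = T) ∧
    (∀ S T : PTree, S.numLeaves = m → T.numLeaves = m →
      (TamariLE S T ↔
        ∀ a b c : ℕ, 1 ≤ a → a < b → b < c → c ≤ m → tau S a b c ≤ tau T a b c)) := by
  refine ⟨?_, ?_⟩
  · rintro S T hS rfl h
    exact eq_of_tau_eq S T hS h
  · rintro S T hS rfl
    exact ⟨fun hle a b c _ hab hbc _ => hle.tau_le hab hbc, tamariLE_of_tau_le T S hS⟩
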